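/- Almost surely, as the integer n → ∞, e^{−α n} ∫_0^n X_s ds converges to A_∞/α + Z_∞. -/

import Mathlib

open MeasureTheory ProbabilityTheory Filter

lemma aux_Z (α : ℝ) (b : ℝ → ℝ) (hb : Continuous b) (T : ℝ) :
    ∫ s in (0:ℝ)..T, (α * Real.exp (α * s) * (∫ u in (0:ℝ)..s, Real.exp (-α * u) * b u) + b s)
      = Real.exp (α * T) * ∫ u in (0:ℝ)..T, Real.exp (-α * u) * b u := by
  have hc : Continuous (fun u => Real.exp (-α * u) * b u) := by fun_prop
  have hd : ∀ s, HasDerivAt (fun s => ∫ u in (0:ℝ)..s, Real.exp (-α * u) * b u)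
      (Real.exp (-α * s) * b s) s := fun s => hc.integral_hasStrictDerivAt 0 s |>.hasDerivAt
  have hZc : Continuous (fun s => ∫ u in (0:ℝ)..s, Real.exp (-α * u) * b u) :=
    continuous_iff_continuousAt.2 fun s => (hd s).continuousAt
  have he : ∀ s, HasDerivAt (fun s => Real.exp (α * s)) (α * Real.exp (α * s)) s := by
    intro s
    have := ((hasDerivAt_id s).const_mul α).exp
    simpa [mul_comm] using this
  have key := intervalIntegral.integral_eq_sub_of_hasDerivAt (a := 0) (b := T)
    (f := fun s => Real.exp (α * s) * ∫ u in (0:ℝ)..s, Real.exp (-α * u) * b u)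
    (f' := fun s => (α * Real.exp (α * s) * (∫ u in (0:ℝ)..s, Real.exp (-α * u) * b u) + b s))
    (fun s _ => by
      have := (he s).mul (hd s)
      have e : Real.exp (α * s) * (Real.exp (-α * s) * b s) = b s := by
        rw [← mul_assoc, ← Real.exp_add]
        simp
      rw [e] at this
      exact this)
    (by apply Continuous.intervalIntegrable; fun_prop)
  rw [key]; simp

lemma aux_A (α : ℝ) (hα : 0 < α) (L : ℝ → ℝ)
    (hLmeas : Measurable L) (hLbdd : ∃ M : ℝ, ∀ t : ℝ, |L t| ≤ M)
    (hLper : ∀ t : ℝ, L (t + 1) = L t)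
    (A : ℝ → ℝ) (hA : ∀ t : ℝ, A t = ∫ s in (0:ℝ)..t, Real.exp (-α * s) * L s)
    (Ainf : ℝ) (hAinf : Ainf = A 1 / (1 - Real.exp (-α))) :
    Continuous A ∧ Tendsto (fun n : ℕ => Real.exp (-α * n) *
      ∫ s in (0:ℝ)..(n:ℝ), Real.exp (α * s) * A s) atTop (nhds (Ainf / α)) := by
  obtain ⟨M, hM⟩ := hLbdd
  have hint : ∀ a b : ℝ, IntervalIntegrable (fun s => Real.exp (-α * s) * L s) volume a b := by
    intro a b
    have h1 : IntervalIntegrable L volume a b := by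
      refine (intervalIntegrable_const (c := M)).mono_fun hLmeas.aestronglyMeasurable ?_
      filter_upwards with x
      simpa using (hM x).trans (le_abs_self M)
    exact h1.continuousOn_mul (by fun_prop)
  have hAc : Continuous A := by
    rw [funext hA]; exact intervalIntegral.continuous_primitive hint 0
  refine ⟨hAc, ?_⟩
  have hrec : ∀ s, A (s + 1) = A 1 + Real.exp (-α) * A s := by
    intro s
    rw [hA (s+1), ← intervalIntegral.integral_add_adjacent_intervals (hint 0 1) (hint 1 (s+1)),
      ← hA 1, hA s]
    congr 1
    have := intervalIntegral.integral_comp_add_right (a := 0) (b := s)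
      (fun s => Real.exp (-α * s) * L s) 1
    rw [zero_add] at this
    rw [← this, ← intervalIntegral.integral_const_mul]
    congr 1; ext x
    rw [hLper, ← mul_assoc, ← Real.exp_add]
    ring_nf
  have hlt : Real.exp (-α) < 1 := by simpa using hα
  have hAi : Ainf = A 1 + Real.exp (-α) * Ainf := by
    have : (1 - Real.exp (-α)) ≠ 0 := by linarith
    rw [hAinf]; field_simp; ring
  set g : ℝ → ℝ := fun s => Real.exp (α * s) * (A s - Ainf) with hg
  have hgc : Continuous g := by fun_prop
  have hper : Function.Periodic g 1 := by
    intro s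
    have h1 : A (s+1) - Ainf = Real.exp (-α) * (A s - Ainf) := by
      rw [hrec]; linarith
    simp only [hg]
    rw [h1, ← mul_assoc, ← Real.exp_add]; ring_nf
  have hgi : ∀ n : ℕ, ∫ s in (0:ℝ)..(n:ℝ), g s = n * ∫ s in (0:ℝ)..1, g s := by
    intro n
    have := hper.intervalIntegral_add_zsmul_eq n 0 (fun _ _ => hgc.intervalIntegrable _ _)
    simpa using this
  have hexp : ∀ n : ℕ, ∫ s in (0:ℝ)..(n:ℝ), Real.exp (α * s) = (Real.exp (α * n) - 1) / α := by
    intro n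
    rw [intervalIntegral.integral_comp_mul_left _ hα.ne']
    simp; ring
  have hmain : ∀ n : ℕ, Real.exp (-α * n) * ∫ s in (0:ℝ)..(n:ℝ), Real.exp (α * s) * A s
      = (n * Real.exp (-α * n)) * (∫ s in (0:ℝ)..1, g s)
        + Ainf / α * (1 - Real.exp (-α * n)) := by
    intro n
    have : ∫ s in (0:ℝ)..(n:ℝ), Real.exp (α * s) * A s
        = (∫ s in (0:ℝ)..(n:ℝ), g s) + Ainf * ∫ s in (0:ℝ)..(n:ℝ), Real.exp (α * s) := by
      rw [← intervalIntegral.integral_const_mul, ← intervalIntegral.integral_add]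
      · congr 1; ext s; simp only [hg]; ring
      · exact hgc.intervalIntegrable _ _
      · apply Continuous.intervalIntegrable; fun_prop
    rw [this, hgi, hexp]
    have h2 : Real.exp (-α * n) * Real.exp (α * n) = 1 := by
      rw [← Real.exp_add]; simp
    linear_combination Ainf / α * h2
  simp_rw [hmain]
  have t1 : Tendsto (fun n : ℕ => Real.exp (-α * n)) atTop (nhds 0) := by
    refine Real.tendsto_exp_atBot.comp ?_
    exact (tendsto_natCast_atTop_atTop).const_mul_atTop_of_neg (by linarith)
  have t2 : Tendsto (fun n : ℕ => (n:ℝ) * Real.exp (-α * n)) atTop (nhds 0) := by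
    have := (Real.tendsto_pow_mul_exp_neg_atTop_nhds_zero 1).comp
      ((tendsto_natCast_atTop_atTop (R := ℝ)).const_mul_atTop hα)
    have := this.const_mul (1/α)
    simp only [mul_zero] at this
    refine this.congr fun n => ?_
    simp; field_simp
  simpa using (t2.mul_const (∫ s in (0:ℝ)..1, g s)).add ((t1.const_sub 1).const_mul (Ainf / α))

lemma aux_int {Ω : Type*} [MeasurableSpace Ω] (P : Measure Ω) [IsProbabilityMeasure P]
    (H : ℝ) (hH1 : 1 / 2 ≤ H)
    (B : ℝ → Ω → ℝ)
    (hBmeas : ∀ t : ℝ, Measurable (B t))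
    (hL2 : ∀ t, 0 ≤ t → MemLp (B t) 2 P)
    (hB2 : ∀ t : ℝ, 0 ≤ t → ∫ ω, B t ω ^ 2 ∂P = t ^ (2 * H))
    (hBcont : ∀ᵐ ω ∂P, ContinuousOn (fun t => B t ω) (Set.Ici (0 : ℝ)))
    (α : ℝ) (hα : 0 < α) :
    ∀ᵐ ω ∂P, IntegrableOn (fun s => Real.exp (-α * s) * B s ω) (Set.Ioi (0:ℝ)) := by
  classical
  obtain ⟨N, hN, hNm, hN0⟩ := exists_measurable_superset_of_null (ae_iff.1 hBcont)
  have hNc : ∀ ω, ω ∉ N → ContinuousOn (fun t => B t ω) (Set.Ici (0 : ℝ)) := by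
    intro ω h; by_contra h'; exact h (hN h')
  have hNae : ∀ᵐ ω ∂P, ω ∉ N := measure_eq_zero_iff_ae_notMem.1 hN0
  let C : ℝ → Ω → ℝ := fun t ω => if ω ∈ N then 0 else B (max t 0) ω
  have hCm : ∀ t, Measurable (C t) := fun t => Measurable.ite hNm measurable_const (hBmeas _)
  have hCc : ∀ ω, Continuous (fun t => C t ω) := by
    intro ω
    by_cases h : ω ∈ N
    · simp only [C, h, if_true]; exact continuous_const
    · simp only [C, h, if_false]
      exact (hNc ω h).comp_continuous (f := fun t : ℝ => max t 0) (by fun_prop) (fun t => Set.mem_Ici.2 (le_max_right _ _))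
  have hCB : ∀ t, 0 ≤ t → C t =ᵐ[P] B t := by
    intro t ht
    filter_upwards [hNae] with ω h
    simp [C, h, ht]
  have hjm : Measurable (Function.uncurry C) :=
    measurable_uncurry_of_continuous_of_measurable hCc hCm
  let F : Ω × ℝ → ℝ := fun p => Real.exp (-α * p.2) * C p.2 p.1
  have hF : Measurable F := by
    have : Measurable (fun p : Ω × ℝ => C p.2 p.1) := hjm.comp measurable_swap
    fun_prop
  have hCint : ∀ t, 0 ≤ t → Integrable (C t) P := fun t ht =>
    (((hL2 t ht).integrable (by norm_num)).congr (hCB t ht).symm)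
  have hFi : Integrable F (P.prod (volume.restrict (Set.Ioi (0:ℝ)))) := by
    rw [integrable_prod_iff' hF.aestronglyMeasurable]
    constructor
    · refine (ae_restrict_mem measurableSet_Ioi).mono fun t ht => ?_
      exact (hCint t (le_of_lt ht)).const_mul (Real.exp (-α * t))
    · have hg : Integrable (fun t : ℝ => Real.exp (-α * t) + t ^ (2 * H) * Real.exp (-α * t))
          (volume.restrict (Set.Ioi (0:ℝ))) := by
        refine Integrable.add (exp_neg_integrableOn_Ioi 0 hα) ?_
        have := integrableOn_rpow_mul_exp_neg_mul_rpow (p := 1) (s := 2 * H) (b := α)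
          (by linarith) one_pos hα
        simpa [IntegrableOn] using this
      refine hg.mono' ?_ ?_
      · exact (hF.norm.stronglyMeasurable.integral_prod_left').aestronglyMeasurable
      · refine (ae_restrict_mem measurableSet_Ioi).mono fun t ht => ?_
        have ht0 : 0 ≤ t := le_of_lt ht
        have e1 : ∫ ω, ‖F (ω, t)‖ ∂P = Real.exp (-α * t) * ∫ ω, |B t ω| ∂P := by
          rw [← integral_const_mul]
          refine integral_congr_ae ?_
          filter_upwards [hCB t ht0] with ω h
          simp [F, h]
        have e2 : ∫ ω, |B t ω| ∂P ≤ 1 + t ^ (2 * H) := by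
          rw [← hB2 t ht0]
          have hi2 : Integrable (fun ω => B t ω ^ 2) P := (hL2 t ht0).integrable_sq
          calc ∫ ω, |B t ω| ∂P ≤ ∫ ω, (1 + B t ω ^ 2) ∂P := by
                refine integral_mono ((hL2 t ht0).integrable (by norm_num)).abs
                  ((integrable_const _).add hi2) fun ω => ?_
                have := sq_abs (B t ω)
                dsimp only
                nlinarith [sq_nonneg (|B t ω| - 1), abs_nonneg (B t ω)]
            _ = _ := by rw [integral_add (integrable_const _) hi2]; simp
        rw [Real.norm_of_nonneg (integral_nonneg fun _ => norm_nonneg _), e1]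
        calc _ ≤ Real.exp (-α * t) * (1 + t ^ (2 * H)) := by gcongr
          _ = _ := by ring
  filter_upwards [hFi.prod_right_ae, hNae] with ω h hω
  refine IntegrableOn.congr_fun (f := fun s => F (ω, s)) h (fun t ht => ?_) measurableSet_Ioi
  simp [F, C, hω, le_of_lt (show (0:ℝ) < t from ht)]

/-- Almost surely, as the integer `n → ∞`,
`e^{-α n} ∫_0^n X_s ds → A_∞ / α + Z_∞`. -/
theorem stmt_15 {Ω : Type*} [MeasurableSpace Ω] (P : Measure Ω) [IsProbabilityMeasure P]
    (H : ℝ) (hH1 : 1 / 2 ≤ H) (hH2 : H < 1)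
    (B : ℝ → Ω → ℝ)
    (hBmeas : ∀ t : ℝ, Measurable (B t))
    (hBgauss : ∀ (m : ℕ) (t : Fin m → ℝ) (c : Fin m → ℝ), (∀ i, 0 ≤ t i) →
      ∃ v : NNReal, Measure.map (fun ω => ∑ i, c i * B (t i) ω) P = gaussianReal 0 v)
    (hB0 : ∀ ω, B 0 ω = 0)
    (hBcov : ∀ s t : ℝ, 0 ≤ s → 0 ≤ t →
      ∫ ω, B s ω * B t ω ∂P = 1 / 2 * (s ^ (2 * H) + t ^ (2 * H) - |t - s| ^ (2 * H)))
    (hBcont : ∀ᵐ ω ∂P, ContinuousOn (fun t => B t ω) (Set.Ici (0 : ℝ)))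
    (α : ℝ) (hα : 0 < α)
    (Z : ℝ → Ω → ℝ)
    (hZ : ∀ (t : ℝ) (ω : Ω), Z t ω = ∫ s in (0:ℝ)..t, Real.exp (-α * s) * B s ω)
    (Zinf : Ω → ℝ)
    (hZinf : ∀ ω : Ω, Zinf ω = ∫ s in Set.Ioi (0:ℝ), Real.exp (-α * s) * B s ω)
    (L : ℝ → ℝ)
    (hLmeas : Measurable L) (hLbdd : ∃ M : ℝ, ∀ t : ℝ, |L t| ≤ M)
    (hLper : ∀ t : ℝ, L (t + 1) = L t)
    (A : ℝ → ℝ) (hA : ∀ t : ℝ, A t = ∫ s in (0:ℝ)..t, Real.exp (-α * s) * L s)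
    (Ainf : ℝ) (hAinf : Ainf = A 1 / (1 - Real.exp (-α)))
    (X : ℝ → Ω → ℝ)
    (hX : ∀ (t : ℝ) (ω : Ω), X t ω = Real.exp (α * t) * A t
        + α * Real.exp (α * t) * Z t ω + B t ω) :
    ∀ᵐ ω ∂P, Tendsto (fun n : ℕ => Real.exp (-α * n) * ∫ s in (0:ℝ)..(n:ℝ), X s ω)
      atTop (nhds (Ainf / α + Zinf ω)) := by
  have hL2 : ∀ t, 0 ≤ t → MemLp (B t) 2 P := by
    intro t ht
    obtain ⟨v, hv⟩ := hBgauss 1 (fun _ => t) (fun _ => 1) (fun _ => ht)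
    simp only [Finset.univ_unique, Finset.sum_const, Finset.card_singleton, one_smul, one_mul] at hv
    have h1 : MemLp id 2 (Measure.map (B t) P) := by
      have := memLp_id_gaussianReal' (μ := 0) (v := v) 2 (by norm_num)
      rw [← hv] at this
      exact this
    exact (memLp_map_measure_iff h1.1 (hBmeas t).aemeasurable).1 h1
  have hB2 : ∀ t : ℝ, 0 ≤ t → ∫ ω, B t ω ^ 2 ∂P = t ^ (2 * H) := by
    intro t ht
    have := hBcov t t ht ht
    simp only [← pow_two, sub_self, abs_zero] at this
    rw [this, Real.zero_rpow (by linarith)]; ring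
  obtain ⟨hAc, hAt⟩ := aux_A α hα L hLmeas hLbdd hLper A hA Ainf hAinf
  filter_upwards [hBcont, aux_int P H hH1 B hBmeas hL2 hB2 hBcont α hα] with ω hc hi
  let b : ℝ → ℝ := fun t => B (max t 0) ω
  have hb : Continuous b :=
    hc.comp_continuous (f := fun t : ℝ => max t 0) (by fun_prop) (fun t => Set.mem_Ici.2 (le_max_right _ _))
  have hbB : ∀ t, 0 ≤ t → b t = B t ω := fun t ht => by simp [b, ht]
  have hZb : ∀ t, 0 ≤ t → Z t ω = ∫ u in (0:ℝ)..t, Real.exp (-α * u) * b u := by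
    intro t ht
    rw [hZ]
    refine intervalIntegral.integral_congr fun u hu => ?_
    rw [Set.uIcc_of_le ht] at hu
    simp only [hbB u hu.1]
  have hcc : Continuous (fun u => Real.exp (-α * u) * b u) := by fun_prop
  have hZc : Continuous (fun s => ∫ u in (0:ℝ)..s, Real.exp (-α * u) * b u) :=
    intervalIntegral.continuous_primitive (fun _ _ => hcc.intervalIntegrable _ _) 0
  have hmain : ∀ n : ℕ, Real.exp (-α * n) * ∫ s in (0:ℝ)..(n:ℝ), X s ω
      = (Real.exp (-α * n) * ∫ s in (0:ℝ)..(n:ℝ), Real.exp (α * s) * A s) + Z n ω := by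
    intro n
    have hn : (0:ℝ) ≤ n := n.cast_nonneg
    have e : ∫ s in (0:ℝ)..(n:ℝ), X s ω = ∫ s in (0:ℝ)..(n:ℝ), (Real.exp (α * s) * A s +
        (α * Real.exp (α * s) * (∫ u in (0:ℝ)..s, Real.exp (-α * u) * b u) + b s)) := by
      refine intervalIntegral.integral_congr fun u hu => ?_
      rw [Set.uIcc_of_le hn] at hu
      simp only [hX, hbB u hu.1, hZb u hu.1]
      ring
    rw [e, intervalIntegral.integral_add, aux_Z α b hb, ← hZb n hn, mul_add, ← mul_assoc (Real.exp _) (Real.exp _),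
      ← Real.exp_add]
    · simp
    · apply Continuous.intervalIntegrable; fun_prop
    · apply Continuous.intervalIntegrable; fun_prop
  simp_rw [hmain]
  refine hAt.add ?_
  rw [hZinf]
  simp_rw [hZ]
  exact intervalIntegral_tendsto_integral_Ioi 0 hi tendsto_natCast_atTop_atTop
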